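/- arXiv:1311.0539 — 2 statements merged into one kernel-verified Lean document; each statement's English description precedes it below -/
import Mathlib

section
/- Let H be a graph with no isolated vertices and minimum degree δ(H), and suppose there exists an N such that every proper edge coloring of K_N contains a rainbow copy of H. Then 2·AR_s(H) ≥ AR_loc(H)·δ(H). -/
open SimpleGraph

/-- A proper edge coloring of `G`: adjacent (distinct, vertex-sharing) edges get
different colors. -/
def IsProperEdgeColoring {V : Type*} (G : SimpleGraph V) (c : Sym2 V → ℕ) : Prop :=
  ∀ e₁ ∈ G.edgeSet, ∀ e₂ ∈ G.edgeSet, e₁ ≠ e₂ → (∃ v, v ∈ e₁ ∧ v ∈ e₂) → c e₁ ≠ c e₂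

/-- `G` contains a rainbow copy of `H` with respect to the edge coloring `c`:
there is an injective graph homomorphism `H → G` whose image edges receive
pairwise distinct colors. -/
def HasRainbowCopy {V W : Type*} (G : SimpleGraph V) (H : SimpleGraph W) (c : Sym2 V → ℕ) : Prop :=
  ∃ f : H →g G, Function.Injective f ∧
    ∀ e₁ ∈ H.edgeSet, ∀ e₂ ∈ H.edgeSet, c (Sym2.map f e₁) = c (Sym2.map f e₂) → e₁ = e₂

/-- `G → H`: every proper edge coloring of `G` contains a rainbow copy of `H`. -/
def ArrowsTo {V W : Type*} (G : SimpleGraph V) (H : SimpleGraph W) : Prop :=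
  ∀ c : Sym2 V → ℕ, IsProperEdgeColoring G c → HasRainbowCopy G H c

/-- The size anti-Ramsey number: the minimum number of edges of a (finite) graph
`G` with `G → H`. -/
noncomputable def ARs {W : Type*} (H : SimpleGraph W) : ℕ :=
  sInf {m | ∃ (n : ℕ) (G : SimpleGraph (Fin n)), ArrowsTo G H ∧ G.edgeSet.ncard = m}

/-- The local anti-Ramsey number: the minimum `n` such that `K_n → H`. -/
noncomputable def ARloc {W : Type*} (H : SimpleGraph W) : ℕ :=
  sInf {n | ArrowsTo (⊤ : SimpleGraph (Fin n)) H}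

/-! Let `G → H`. Every vertex in the image of a copy of `H` in `G` has degree at least `δ(H)` in
`G`, so all copies of `H` live on the set `S` of vertices of degree at least `δ(H)`. A proper
coloring of `G[S]` extends to `G` by giving the remaining edges new, pairwise distinct colors, hence
already `G[S] → H`, and a fortiori `K_|S| → H`. Thus `AR_loc(H) ≤ |S|`, while the handshake lemma
gives `|S| δ(H) ≤ 2 e(G)`. -/

section Transfer

variable {V V' W : Type*} {G : SimpleGraph V} {G' : SimpleGraph V'} {H : SimpleGraph W}

theorem IsProperEdgeColoring.comp_copy {c : Sym2 V' → ℕ} (hc : IsProperEdgeColoring G' c)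
    (φ : Copy G G') : IsProperEdgeColoring G (c ∘ Sym2.map φ) := by
  rintro e₁ he₁ e₂ he₂ hne ⟨v, hv₁, hv₂⟩
  exact hc _ (φ.toHom.map_mem_edgeSet he₁) _ (φ.toHom.map_mem_edgeSet he₂)
    ((Sym2.map.injective φ.injective).ne hne)
    ⟨φ v, Sym2.mem_map.2 ⟨v, hv₁, rfl⟩, Sym2.mem_map.2 ⟨v, hv₂, rfl⟩⟩

theorem HasRainbowCopy.of_comp_copy {c : Sym2 V' → ℕ} (φ : Copy G G')
    (h : HasRainbowCopy G H (c ∘ Sym2.map φ)) : HasRainbowCopy G' H c := by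
  obtain ⟨f, hf, hrainbow⟩ := h
  refine ⟨φ.toHom.comp f, φ.injective.comp hf, fun e₁ he₁ e₂ he₂ heq => hrainbow e₁ he₁ e₂ he₂ ?_⟩
  simp only [Function.comp_apply, Sym2.map_map]
  exact heq

theorem ArrowsTo.of_isContained (hG : ArrowsTo G H) (h : G.IsContained G') : ArrowsTo G' H := by
  obtain ⟨φ⟩ := h
  exact fun c hc => (hG _ (hc.comp_copy φ)).of_comp_copy φ

end Transfer

section Induce

variable {V V' W : Type*} {G : SimpleGraph V} {H : SimpleGraph W}

-- The edges outside the range of `f` need new colors, but `c` may already use all of `ℕ`; this is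
-- why the extension agrees with `c` only up to renaming colors.
theorem IsProperEdgeColoring.exists_extend [Countable V] (f : V' ↪ V) {c : Sym2 V' → ℕ}
    (hc : IsProperEdgeColoring (G.comap f) c) :
    ∃ c' : Sym2 V → ℕ, IsProperEdgeColoring G c' ∧
      ∀ e₁ e₂, c' (e₁.map f) = c' (e₂.map f) ↔ c e₁ = c e₂ := by
  have hf : Function.Injective (Sym2.map f) := Sym2.map.injective f.injective
  have : Countable (Sym2 V) := Quotient.countable
  obtain ⟨code, hcode⟩ := Countable.exists_injective_nat (ℕ ⊕ Sym2 V)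
  let color : Sym2 V → ℕ ⊕ Sym2 V := Function.extend (Sym2.map f) (Sum.inl ∘ c) Sum.inr
  have color_map (e : Sym2 V') : color (e.map f) = Sum.inl (c e) := hf.extend_apply _ _ e
  have color_of_notMem {e : Sym2 V} (he : e ∉ Set.range (Sym2.map f)) : color e = Sum.inr e :=
    Function.extend_apply' _ _ e he
  refine ⟨code ∘ color, ?_, fun e₁ e₂ => by
    simp only [Function.comp_apply, hcode.eq_iff, color_map, Sum.inl.injEq]⟩
  rintro e₁ he₁ e₂ he₂ hne ⟨v, hv₁, hv₂⟩ heq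
  replace heq : color e₁ = color e₂ := hcode heq
  by_cases hr₁ : e₁ ∈ Set.range (Sym2.map f) <;> by_cases hr₂ : e₂ ∈ Set.range (Sym2.map f)
  · obtain ⟨a, rfl⟩ := hr₁
    obtain ⟨b, rfl⟩ := hr₂
    obtain ⟨x, hxa, rfl⟩ := Sym2.mem_map.1 hv₁
    have hxb : x ∈ b := by
      obtain ⟨y, hyb, hyx⟩ := Sym2.mem_map.1 hv₂
      exact f.injective hyx ▸ hyb
    rw [color_map, color_map, Sum.inl.injEq] at heq
    have hmem {e : Sym2 V'} : e.map f ∈ G.edgeSet → e ∈ (G.comap f).edgeSet :=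
      (Embedding.comap f G).map_mem_edgeSet_iff.1
    exact hc a (hmem he₁) b (hmem he₂) (ne_of_apply_ne _ hne) ⟨x, hxa, hxb⟩ heq
  · obtain ⟨a, rfl⟩ := hr₁
    simp [color_map, color_of_notMem hr₂] at heq
  · obtain ⟨b, rfl⟩ := hr₂
    simp [color_map, color_of_notMem hr₁] at heq
  · rw [color_of_notMem hr₁, color_of_notMem hr₂] at heq
    exact hne (Sum.inr_injective heq)

theorem ArrowsTo.induce [Countable V] (hG : ArrowsTo G H) {s : Set V}
    (hs : ∀ f : Copy H G, Set.range f ⊆ s) : ArrowsTo (G.induce s) H := by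
  intro c hc
  obtain ⟨c', hc', hcc'⟩ := hc.exists_extend (Function.Embedding.subtype (· ∈ s))
  obtain ⟨f, hf, hrainbow⟩ := hG c' hc'
  have hfs (w : W) : f w ∈ s := hs (f.toCopy hf) ⟨w, rfl⟩
  let g : H →g G.induce s := ⟨fun w => ⟨f w, hfs w⟩, fun h => f.map_adj h⟩
  have map_g (e : Sym2 W) : (e.map g).map (Function.Embedding.subtype (· ∈ s)) = e.map f :=
    Sym2.map_map e
  refine ⟨g, fun a b h => hf (congrArg Subtype.val h), fun e₁ he₁ e₂ he₂ heq => ?_⟩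
  rw [← hcc', map_g, map_g] at heq
  exact hrainbow e₁ he₁ e₂ he₂ heq

end Induce

section Finite

variable {V W : Type*} [Finite V] {G : SimpleGraph V} {H : SimpleGraph W}

theorem ArrowsTo.top_fin_card (hG : ArrowsTo G H) :
    ArrowsTo (⊤ : SimpleGraph (Fin (Nat.card V))) H :=
  hG.of_isContained (isContained_top_iff.2 ⟨(Finite.equivFin V).toEmbedding⟩)

theorem ArrowsTo.ARloc_le_card (hG : ArrowsTo G H) : ARloc H ≤ Nat.card V :=
  Nat.sInf_le hG.top_fin_card

theorem ArrowsTo.exists_ncard_edgeSet_eq_ARs (hG : ArrowsTo G H) :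
    ∃ (n : ℕ) (G' : SimpleGraph (Fin n)), ArrowsTo G' H ∧ G'.edgeSet.ncard = ARs H :=
  Nat.sInf_mem (s := {m | ∃ (n : ℕ) (G' : SimpleGraph (Fin n)),
    ArrowsTo G' H ∧ G'.edgeSet.ncard = m}) ⟨_, _, ⊤, hG.top_fin_card, rfl⟩

end Finite

section Degree

open Finset

theorem card_filter_le_degree_mul_le {V : Type*} [Fintype V] (G : SimpleGraph V)
    [DecidableRel G.Adj] (d : ℕ) : #{v | d ≤ G.degree v} * d ≤ 2 * #G.edgeFinset :=
  calc #{v | d ≤ G.degree v} * d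
      ≤ ∑ v with d ≤ G.degree v, G.degree v :=
        card_nsmul_le_sum _ _ _ fun _ hv => (mem_filter.1 hv).2
    _ ≤ ∑ v, G.degree v := sum_le_sum_of_subset (filter_subset _ _)
    _ = 2 * #G.edgeFinset := G.sum_degrees_eq_twice_card_edges

variable {V W : Type*} [Fintype V] [Fintype W] {G : SimpleGraph V} {H : SimpleGraph W}
  [DecidableRel G.Adj] [DecidableRel H.Adj]

theorem ArrowsTo.ARloc_le_card_filter_minDegree_le_degree (hG : ArrowsTo G H) :
    ARloc H ≤ #{v | H.minDegree ≤ G.degree v} := by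
  have hrange (f : Copy H G) : Set.range f ⊆ {v | H.minDegree ≤ G.degree v} := by
    rintro _ ⟨w, rfl⟩
    exact (H.minDegree_le_degree w).trans (f.degree_le w)
  simpa only [Set.coe_ofPred, Nat.card_eq_fintype_card, Fintype.card_subtype] using
    (hG.induce hrange).ARloc_le_card

theorem ArrowsTo.ARloc_mul_minDegree_le (hG : ArrowsTo G H) :
    ARloc H * H.minDegree ≤ 2 * #G.edgeFinset :=
  (Nat.mul_le_mul_right _ hG.ARloc_le_card_filter_minDegree_le_degree).trans
    (card_filter_le_degree_mul_le G _)

end Degree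

theorem stmt_1 {W : Type} [Fintype W] (H : SimpleGraph W) [DecidableRel H.Adj]
    (hiso : ∀ v : W, ∃ w, H.Adj v w)
    (h : ∃ N : ℕ, ArrowsTo (⊤ : SimpleGraph (Fin N)) H) :
    ARloc H * H.minDegree ≤ 2 * ARs H := by
  classical
  obtain ⟨N, hN⟩ := h
  obtain ⟨n, G, hG, hcard⟩ := hN.exists_ncard_edgeSet_eq_ARs
  rw [← hcard, ← coe_edgeFinset, Set.ncard_coe_finset]
  exact hG.ARloc_mul_minDegree_le
end

section
/- AR_s(K_4) = 15. That is: (i) the 15-edge graph on 7 vertices obtained from the disjoint union of a triangle on a vertex set X and an independent set Y of 4 vertices by adding all edges between X and Y has the property that every proper edge coloring of it contains a rainbow copy of K_4; and (ii) every graph with at most 14 edges admits a proper edge coloring containing no rainbow copy of K_4. -/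
open SimpleGraph

/-!
Opposite edges are the only ones in a properly colored `K₄` that may share a color, so avoiding a
rainbow `K₄` means that each `K₄` has two opposite edges of the same color. For a triangle `abd`
joined to more than three vertices `y` this is impossible: some two of the `y` would repeat the
color of the same triangle edge at the same triangle vertex.

For the lower bound, take a critical graph: one that loses `G → K₄` when the edges at any vertex `v`
are deleted. A coloring of `G - v` without rainbow `K₄` extends to `v` by fresh colors unless `v`
lies in a `K₄`; hence all degrees are at least `3`, and the neighbors of a vertex `v` of degree `3`
form a triangle `abd`. In that case the extension is also possible by reusing the color of `bd` on
`va`, unless that color already occurs at `a`. It follows that vertices of degree `3` are pairwise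
nonadjacent. Since `K₆` is `5`-edge-colorable, while a rainbow `K₄` needs six colors, there are at
least `7` vertices; if there are exactly `7`, then the freedom in choosing a one-factorization of
`K₆` forces the neighbors of a vertex of degree `3` to be adjacent to everything. Counting the edges
that meet a suitable set `B` disjoint from a clique `A` then gives at least `15` edges, where `B`
consists of all vertices of degree `3` and `A` is a triangle `abd`, or, if there is no vertex of
degree `3`, `A` is a `K₄` and `B` any three other vertices.
-/

local notation "K₄" => (⊤ : SimpleGraph (Fin 4))

section Coloring

variable {V W α β : Type*} {G : SimpleGraph V} {H : SimpleGraph W} {c : Sym2 V → α}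

/-- Properness of an edge coloring, phrased through pairs of edges `xy`, `xz` at a common vertex.
Unlike in `IsProperEdgeColoring` the type of colors is arbitrary, so that fresh colors can be
adjoined to it. -/
def IsProper (G : SimpleGraph V) (c : Sym2 V → α) : Prop :=
  ∀ ⦃x y z⦄, G.Adj x y → G.Adj x z → y ≠ z → c s(x, y) ≠ c s(x, z)

/-- A proper edge coloring without rainbow `K₄`. As only opposite edges of a properly colored `K₄`
can share a color, a `K₄` is not rainbow exactly if two opposite edges do. -/
structure IsRainbowK4Free (G : SimpleGraph V) (c : Sym2 V → α) : Prop where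
  isProper : IsProper G c
  opposite_eq ⦃x y z w : V⦄ : G.Adj x y → G.Adj x z → G.Adj x w →
    G.Adj y z → G.Adj y w → G.Adj z w →
    c s(x, y) = c s(z, w) ∨ c s(x, z) = c s(y, w) ∨ c s(x, w) = c s(y, z)

theorem isProperEdgeColoring_iff_isProper {c : Sym2 V → ℕ} :
    IsProperEdgeColoring G c ↔ IsProper G c := by
  constructor
  · intro hc x y z hxy hxz hyz
    exact hc _ hxy _ hxz (by rwa [ne_eq, Sym2.congr_right]) ⟨x, by simp, by simp⟩
  · rintro hc _ he₁ _ he₂ hne ⟨x, ⟨y, rfl⟩, ⟨z, rfl⟩⟩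
    exact hc he₁ he₂ (by rintro rfl; exact hne rfl)

theorem IsProper.nodup_colors (hc : IsProper G c) {x y z w : V}
    (hxy : G.Adj x y) (hxz : G.Adj x z) (hxw : G.Adj x w)
    (hyz : G.Adj y z) (hyw : G.Adj y w) (hzw : G.Adj z w)
    (h₁ : c s(x, y) ≠ c s(z, w)) (h₂ : c s(x, z) ≠ c s(y, w)) (h₃ : c s(x, w) ≠ c s(y, z)) :
    ([s(x, y), s(x, z), s(x, w), s(y, z), s(y, w), s(z, w)].map c).Nodup := by
  have ne_at_middle {a b u : V} (hau : G.Adj a u) (hub : G.Adj u b) (hab : a ≠ b) :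
      c s(a, u) ≠ c s(u, b) :=
    Sym2.eq_swap (a := u) ▸ hc hau.symm hub hab
  have ne_at_end {a b u : V} (hau : G.Adj a u) (hbu : G.Adj b u) (hab : a ≠ b) :
      c s(a, u) ≠ c s(b, u) :=
    Sym2.eq_swap (a := u) (b := b) ▸ ne_at_middle hau hbu.symm hab
  simp [h₁, h₂, h₃, hc hxy hxz hyz.ne, hc hxy hxw hyw.ne, hc hxz hxw hzw.ne,
    ne_at_middle hxy hyz hxz.ne, ne_at_middle hxy hyw hxw.ne, hc hyz hyw hzw.ne,
    ne_at_end hxz hyz hxy.ne, ne_at_middle hxz hzw hxw.ne, ne_at_middle hyz hzw hyw.ne,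
    ne_at_end hxw hyw hxy.ne, ne_at_end hxw hzw hxz.ne, ne_at_end hyw hzw hyz.ne]

theorem IsProper.isRainbowK4Free_of_card_lt_six [Fintype α] (hc : IsProper G c)
    (hα : Fintype.card α < 6) : IsRainbowK4Free G c := by
  refine ⟨hc, fun x y z w hxy hxz hxw hyz hyw hzw => ?_⟩
  by_contra! ⟨h₁, h₂, h₃⟩
  exact (hc.nodup_colors hxy hxz hxw hyz hyw hzw h₁ h₂ h₃).length_le_card.not_gt hα

theorem IsProper.hasRainbowCopy {c : Sym2 V → ℕ} (hc : IsProper G c) {x y z w : V}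
    (hxy : G.Adj x y) (hxz : G.Adj x z) (hxw : G.Adj x w)
    (hyz : G.Adj y z) (hyw : G.Adj y w) (hzw : G.Adj z w)
    (h₁ : c s(x, y) ≠ c s(z, w)) (h₂ : c s(x, z) ≠ c s(y, w)) (h₃ : c s(x, w) ≠ c s(y, z)) :
    HasRainbowCopy G K₄ c := by
  have adj : ∀ i j, i ≠ j → G.Adj (![x, y, z, w] i) (![x, y, z, w] j) := by
    simp [Fin.forall_fin_succ, *, hxy.symm, hxz.symm, hxw.symm, hyz.symm, hyw.symm, hzw.symm]
  have mem_edges : ∀ e ∈ edgeSet K₄,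
      e ∈ [s(0, 1), s(0, 2), s(0, 3), s(1, 2), s(1, 3), s(2, 3)] := by decide
  refine ⟨⟨![x, y, z, w], adj _ _⟩, fun i j hij => ?_, fun e₁ he₁ e₂ he₂ h => ?_⟩
  · by_contra hne
    exact (adj i j hne).ne hij
  · exact List.inj_on_of_nodup_map (f := fun e => c (e.map ![x, y, z, w]))
      (hc.nodup_colors hxy hxz hxw hyz hyw hzw h₁ h₂ h₃) (mem_edges _ he₁) (mem_edges _ he₂) h

theorem exists_isRainbowK4Free_of_not_arrowsTo (h : ¬ ArrowsTo G K₄) :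
    ∃ c : Sym2 V → ℕ, IsRainbowK4Free G c := by
  simp only [ArrowsTo, not_forall, isProperEdgeColoring_iff_isProper] at h
  obtain ⟨c, hc, hrainbow⟩ := h
  refine ⟨c, hc, fun x y z w hxy hxz hxw hyz hyw hzw => ?_⟩
  by_contra! ⟨h₁, h₂, h₃⟩
  exact hrainbow (hc.hasRainbowCopy hxy hxz hxw hyz hyw hzw h₁ h₂ h₃)

namespace IsRainbowK4Free

theorem comp_injective (hc : IsRainbowK4Free G c) {g : α → β} (hg : Function.Injective g) :
    IsRainbowK4Free G (g ∘ c) where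
  isProper _ _ _ hxy hxz hyz := hg.ne (hc.isProper hxy hxz hyz)
  opposite_eq _ _ _ _ hxy hxz hxw hyz hyw hzw :=
    (hc.opposite_eq hxy hxz hxw hyz hyw hzw).imp (congrArg g) (Or.imp (congrArg g) (congrArg g))

theorem not_hasRainbowCopy {c : Sym2 V → ℕ} (hc : IsRainbowK4Free G c) :
    ¬ HasRainbowCopy G K₄ c := by
  rintro ⟨f, -, hf⟩
  have adj (i j : Fin 4) (h : i ≠ j) : G.Adj (f i) (f j) := f.map_adj h
  rcases hc.opposite_eq (adj 0 1 (by decide)) (adj 0 2 (by decide)) (adj 0 3 (by decide))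
    (adj 1 2 (by decide)) (adj 1 3 (by decide)) (adj 2 3 (by decide)) with h | h | h
  · exact absurd (hf s(0, 1) (by simp) s(2, 3) (by simp) h) (by decide)
  · exact absurd (hf s(0, 2) (by simp) s(1, 3) (by simp) h) (by decide)
  · exact absurd (hf s(0, 3) (by simp) s(1, 2) (by simp) h) (by decide)

theorem not_arrowsTo [Countable α] (hc : IsRainbowK4Free G c) : ¬ ArrowsTo G K₄ := by
  obtain ⟨g, hg⟩ := exists_injective_nat α
  have hgc := hc.comp_injective hg
  exact fun h => hgc.not_hasRainbowCopy (h _ (isProperEdgeColoring_iff_isProper.2 hgc.isProper))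

theorem mono {H : SimpleGraph V} (hc : IsRainbowK4Free H c) (h : G ≤ H) :
    IsRainbowK4Free G c where
  isProper _ _ _ hxy hxz hyz := hc.isProper (h hxy) (h hxz) hyz
  opposite_eq _ _ _ _ hxy hxz hxw hyz hyw hzw :=
    hc.opposite_eq (h hxy) (h hxz) (h hxw) (h hyz) (h hyw) (h hzw)

theorem comap {c : Sym2 W → α} (hc : IsRainbowK4Free H c) (f : G →g H)
    (hf : Function.Injective f) : IsRainbowK4Free G (c ∘ Sym2.map f) where
  isProper _ _ _ hxy hxz hyz := hc.isProper (f.map_adj hxy) (f.map_adj hxz) (hf.ne hyz)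
  opposite_eq _ _ _ _ hxy hxz hxw hyz hyw hzw := hc.opposite_eq (f.map_adj hxy) (f.map_adj hxz)
    (f.map_adj hxw) (f.map_adj hyz) (f.map_adj hyw) (f.map_adj hzw)

end IsRainbowK4Free

end Coloring

section StarExtension

variable {V α : Type*} {G : SimpleGraph V} {v : V} {f : V → α} {c : Sym2 V → α}

open Classical in
/-- The edge coloring that gives the edge `vx` the color `f x` and agrees with `c` on the edges
avoiding `v`. -/
noncomputable def recolorStar (v : V) (f : V → α) (c : Sym2 V → α) (e : Sym2 V) : α :=
  if h : v ∈ e then f (Sym2.Mem.other h) else c e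

@[simp]
theorem recolorStar_mk_left (x : V) : recolorStar v f c s(v, x) = f x := by
  have h : v ∈ s(v, x) := Sym2.mem_mk_left v x
  rw [recolorStar, dif_pos h, Sym2.congr_right.1 (Sym2.other_spec h)]

@[simp]
theorem recolorStar_mk_right (x : V) : recolorStar v f c s(x, v) = f x := by
  rw [Sym2.eq_swap, recolorStar_mk_left]

theorem recolorStar_of_ne {x y : V} (hx : x ≠ v) (hy : y ≠ v) :
    recolorStar v f c s(x, y) = c s(x, y) :=
  dif_neg (by simp [hx.symm, hy.symm])

theorem IsProper.recolorStar (hc : IsProper (G.deleteIncidenceSet v) c)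
    (hf : Set.InjOn f (G.neighborSet v))
    (hfc : ∀ ⦃x y⦄, G.Adj v x → (G.deleteIncidenceSet v).Adj x y → f x ≠ c s(x, y)) :
    IsProper G (recolorStar v f c) := by
  intro x y z hxy hxz hyz
  obtain rfl | hx := eq_or_ne x v
  · simpa using hf.ne hxy hxz hyz
  obtain rfl | hy := eq_or_ne y v
  · rw [recolorStar_mk_right, recolorStar_of_ne hx hyz.symm]
    exact hfc hxy.symm (deleteIncidenceSet_adj.2 ⟨hxz, hx, hyz.symm⟩)
  obtain rfl | hz := eq_or_ne z v
  · rw [recolorStar_mk_right, recolorStar_of_ne hx hy]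
    exact (hfc hxz.symm (deleteIncidenceSet_adj.2 ⟨hxy, hx, hy⟩)).symm
  rw [recolorStar_of_ne hx hy, recolorStar_of_ne hx hz]
  exact hc (deleteIncidenceSet_adj.2 ⟨hxy, hx, hy⟩) (deleteIncidenceSet_adj.2 ⟨hxz, hx, hz⟩) hyz

theorem IsRainbowK4Free.recolorStar (hc : IsRainbowK4Free (G.deleteIncidenceSet v) c)
    (hf : Set.InjOn f (G.neighborSet v))
    (hfc : ∀ ⦃x y⦄, G.Adj v x → (G.deleteIncidenceSet v).Adj x y → f x ≠ c s(x, y))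
    (hopp : ∀ ⦃x y z⦄, G.Adj v x → G.Adj v y → G.Adj v z → G.Adj x y → G.Adj x z → G.Adj y z →
      f x = c s(y, z) ∨ f y = c s(x, z) ∨ f z = c s(x, y)) :
    IsRainbowK4Free G (recolorStar v f c) := by
  refine ⟨hc.isProper.recolorStar hf hfc, fun x y z w hxy hxz hxw hyz hyw hzw => ?_⟩
  obtain rfl | hx := eq_or_ne x v
  · have := hopp hxy hxz hxw hyz hyw hzw
    simpa [recolorStar_of_ne, hxy.ne', hxz.ne', hxw.ne'] using this
  obtain rfl | hy := eq_or_ne y v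
  · have := hopp hxy.symm hyz hyw hxz hxw hzw
    simp only [recolorStar_mk_left, recolorStar_mk_right, recolorStar_of_ne, hxy.ne, hyz.ne',
      hyw.ne', ne_eq, not_false_eq_true]
    grind
  obtain rfl | hz := eq_or_ne z v
  · have := hopp hxz.symm hyz.symm hzw hxy hxw hyw
    simp only [recolorStar_mk_left, recolorStar_mk_right, recolorStar_of_ne, hxz.ne, hyz.ne,
      hzw.ne', ne_eq, not_false_eq_true]
    grind
  obtain rfl | hw := eq_or_ne w v
  · have := hopp hxw.symm hyw.symm hzw.symm hxy hxz hyz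
    simp only [recolorStar_mk_right, recolorStar_of_ne, hxw.ne, hyw.ne, hzw.ne,
      ne_eq, not_false_eq_true]
    grind
  have adj {a b : V} (h : G.Adj a b) (ha : a ≠ v) (hb : b ≠ v) :
      (G.deleteIncidenceSet v).Adj a b := deleteIncidenceSet_adj.2 ⟨h, ha, hb⟩
  simpa only [recolorStar_of_ne, hx, hy, hz, hw, ne_eq, not_false_eq_true] using
    hc.opposite_eq (adj hxy hx hy) (adj hxz hx hz) (adj hxw hx hw) (adj hyz hy hz)
      (adj hyw hy hw) (adj hzw hz hw)

theorem IsRainbowK4Free.inl (hc : IsRainbowK4Free G c) :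
    IsRainbowK4Free G (fun e => (Sum.inl (c e) : α ⊕ V)) :=
  hc.comp_injective Sum.inl_injective

/-- If `v` lies in no `K₄`, then its edges may all receive fresh colors. -/
theorem IsRainbowK4Free.not_arrowsTo_of_forall_not_isNClique [Countable V] [Countable α]
    (hc : IsRainbowK4Free (G.deleteIncidenceSet v) c)
    (hv : ∀ s : Finset V, G.IsNClique 3 s → ¬ ∀ x ∈ s, G.Adj v x) : ¬ ArrowsTo G K₄ := by
  classical
  refine (hc.inl.recolorStar (f := Sum.inr) Sum.inr_injective.injOn (by simp) ?_).not_arrowsTo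
  intro x y z hx hy hz hxy hxz hyz
  exact absurd (by simp [hx, hy, hz]) (hv {x, y, z} (is3Clique_triple_iff.2 ⟨hxy, hxz, hyz⟩))

/-- The edge `va` may receive the color of its opposite edge `bd`, and `vb`, `vd` fresh colors. -/
theorem IsRainbowK4Free.not_arrowsTo_of_forall_ne [Countable V] [Countable α]
    (hc : IsRainbowK4Free (G.deleteIncidenceSet v) c) {a b d : V} (hab : a ≠ b) (had : a ≠ d)
    (hv : ∀ ⦃x⦄, G.Adj v x → x = a ∨ x = b ∨ x = d)
    (ha : ∀ ⦃y⦄, (G.deleteIncidenceSet v).Adj a y → c s(a, y) ≠ c s(b, d)) :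
    ¬ ArrowsTo G K₄ := by
  classical
  let f : V → α ⊕ V := fun x => if x = a then Sum.inl (c s(b, d)) else Sum.inr x
  refine (hc.inl.recolorStar (f := f) ?_ ?_ ?_).not_arrowsTo
  · intro x _ y _ hxy
    grind
  · intro x y _ hxy
    obtain rfl | hx := eq_or_ne x a
    · simpa [f] using (ha hxy).symm
    · simp [f, hx]
  · intro x y z hx hy hz hxy hxz hyz
    have hxy := hxy.ne
    have hxz := hxz.ne
    have hyz := hyz.ne
    rcases hv hx with rfl | rfl | rfl <;> rcases hv hy with rfl | rfl | rfl <;>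
      rcases hv hz with rfl | rfl | rfl <;> simp_all [f, Sym2.eq_swap]

end StarExtension

section OneFactorization

variable {V A : Type*} {G : SimpleGraph V}

/-- The classical one-factorization of the complete graph on `A ∪ {∞}`, where `∞` is `none`: the
edge `ij` has color `i + j` and the edge `∞i` has color `i + i`. -/
def oneFactorization [AddCommMagma A] [Zero A] : Sym2 (Option A) → A :=
  Sym2.lift ⟨fun
    | some i, some j => i + j
    | some i, none => i + i
    | none, some i => i + i
    | none, none => 0, by rintro (_ | i) (_ | j) <;> simp [add_comm]⟩

theorem isProper_oneFactorization [AddCommGroup A] (hA : Function.Injective fun i : A => i + i) :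
    IsProper (⊤ : SimpleGraph (Option A)) oneFactorization := by
  rintro (_ | i) (_ | j) (_ | k) hxy hxz hyz <;>
    simp_all [oneFactorization, hA.eq_iff, eq_comm]

theorem isRainbowK4Free_oneFactorization :
    IsRainbowK4Free (⊤ : SimpleGraph (Option (ZMod 5))) oneFactorization :=
  (isProper_oneFactorization (by decide)).isRainbowK4Free_of_card_lt_six (by decide)

theorem not_arrowsTo_of_natCard_le_six [Finite V] (hV : Nat.card V ≤ 6) : ¬ ArrowsTo G K₄ := by
  have : Fintype V := .ofFinite V
  obtain ⟨f⟩ : Nonempty (V ↪ Option (ZMod 5)) :=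
    Function.Embedding.nonempty_of_card_le (by simpa [← Nat.card_eq_fintype_card] using hV)
  exact (isRainbowK4Free_oneFactorization.comap ((Embedding.completeGraph f).toHom.comp
    (Hom.ofLE le_top)) f.injective).not_arrowsTo

theorem exists_isRainbowK4Free_top_eq (hV : Nat.card V = 6) {a x b d : V}
    (h : [a, x, b, d].Nodup) :
    ∃ c : Sym2 V → ZMod 5, IsRainbowK4Free (⊤ : SimpleGraph V) c ∧ c s(a, x) = c s(b, d) := by
  have : Finite V := Nat.finite_of_card_ne_zero (by simp [hV])
  obtain ⟨e⟩ : Nonempty (V ≃ Option (ZMod 5)) := Finite.card_eq.1 (by simp [hV])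
  -- The edges `{1, -1}` and `{2, -2}` of the one-factorization both have color `0`.
  have matching_injective :
      Function.Injective (![some 1, some (-1), some 2, some (-2)] : Fin 4 → Option (ZMod 5)) := by
    decide
  obtain ⟨σ, hσ⟩ := Equiv.Perm.exists_extending_pair (e ∘ [a, x, b, d].get)
    _ (e.injective.comp (List.nodup_iff_injective_get.1 h)) matching_injective
  refine ⟨_, isRainbowK4Free_oneFactorization.comap
    (Embedding.completeGraph (e.trans σ).toEmbedding).toHom (e.trans σ).injective, ?_⟩
  have ha : σ (e a) = some 1 := hσ 0
  have hx : σ (e x) = some (-1) := hσ 1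
  have hb : σ (e b) = some 2 := hσ 2
  have hd : σ (e d) = some (-2) := hσ 3
  simp [ha, hx, hb, hd, oneFactorization]

end OneFactorization

section Critical

variable {V W : Type*} {G : SimpleGraph V}

theorem IsRainbowK4Free.extend {α : Type*} {H : SimpleGraph W} {c : Sym2 W → α}
    (hc : IsRainbowK4Free H c) {i : W → V} (hi : Function.Injective i)
    (hG : G.support ⊆ Set.range i) (hGH : G.comap i ≤ H) (d : Sym2 V → α) :
    IsRainbowK4Free G (Function.extend (Sym2.map i) c d) := by
  have mem_range {x y : V} (h : G.Adj x y) : ∃ u, i u = x := hG (G.mem_support.2 ⟨y, h⟩)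
  have extend_mk (u w : W) : Function.extend (Sym2.map i) c d s(i u, i w) = c s(u, w) :=
    (Sym2.map.injective hi).extend_apply c d s(u, w)
  constructor
  · intro x y z hxy hxz hyz
    obtain ⟨x, rfl⟩ := mem_range hxy
    obtain ⟨y, rfl⟩ := mem_range hxy.symm
    obtain ⟨z, rfl⟩ := mem_range hxz.symm
    simpa only [extend_mk] using hc.isProper (hGH hxy) (hGH hxz) (ne_of_apply_ne i hyz)
  · intro x y z w hxy hxz hxw hyz hyw hzw
    obtain ⟨x, rfl⟩ := mem_range hxy
    obtain ⟨y, rfl⟩ := mem_range hyz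
    obtain ⟨z, rfl⟩ := mem_range hzw
    obtain ⟨w, rfl⟩ := mem_range hzw.symm
    simpa only [extend_mk] using
      hc.opposite_eq (hGH hxy) (hGH hxz) (hGH hxw) (hGH hyz) (hGH hyw) (hGH hzw)

theorem ArrowsTo.of_comap_le {H : SimpleGraph W} (hG : ArrowsTo G K₄) {i : W → V}
    (hi : Function.Injective i) (hsupp : G.support ⊆ Set.range i) (hGH : G.comap i ≤ H) :
    ArrowsTo H K₄ := by
  by_contra hH
  obtain ⟨c, hc⟩ := exists_isRainbowK4Free_of_not_arrowsTo hH
  exact (hc.extend hi hsupp hGH 0).not_arrowsTo hG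

theorem exists_isRainbowK4Free_deleteIncidenceSet_top_eq (hV : Nat.card V = 7) {v a x b d : V}
    (h : [v, a, x, b, d].Nodup) :
    ∃ c : Sym2 V → ZMod 5,
      IsRainbowK4Free ((⊤ : SimpleGraph V).deleteIncidenceSet v) c ∧ c s(a, x) = c s(b, d) := by
  classical
  have : Fintype V := @Fintype.ofFinite V (Nat.finite_of_card_ne_zero (by simp [hV]))
  obtain ⟨⟨hva, hvx, hvb, hvd⟩, h⟩ : (v ≠ a ∧ v ≠ x ∧ v ≠ b ∧ v ≠ d) ∧ [a, x, b, d].Nodup := by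
    simpa using h
  have hcard : Nat.card {u // u ≠ v} = 6 := by
    rw [Nat.card_eq_fintype_card] at hV ⊢
    exact (Set.card_ne_eq v).trans (by rw [hV])
  obtain ⟨c, hc, hceq⟩ := exists_isRainbowK4Free_top_eq hcard
    (a := ⟨a, hva.symm⟩) (x := ⟨x, hvx.symm⟩) (b := ⟨b, hvb.symm⟩) (d := ⟨d, hvd.symm⟩)
    (by simpa using h)
  refine ⟨Function.extend (Sym2.map (↑)) c 0, hc.extend Subtype.val_injective (fun u hu =>
    ⟨⟨u, (support_deleteIncidenceSet_subset _ v hu).2⟩, rfl⟩) le_top 0, ?_⟩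
  have extend_mk := (Sym2.map.injective (Subtype.val_injective (p := (· ≠ v)))).extend_apply c 0
  exact (extend_mk s(_, _)).trans (hceq.trans (extend_mk s(_, _)).symm)

/-- A graph `G` with `G → K₄` that loses this property whenever the edges at a vertex are
deleted. -/
structure IsCritical (G : SimpleGraph V) : Prop where
  arrowsTo : ArrowsTo G K₄
  not_arrowsTo_deleteIncidenceSet (v : V) : ¬ ArrowsTo (G.deleteIncidenceSet v) K₄

theorem ArrowsTo.exists_isCritical_induce [Finite V] (hG : ArrowsTo G K₄) :
    ∃ s : Set V, IsCritical (G.induce s) := by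
  have arrowsTo_univ : ArrowsTo (G.induce Set.univ) K₄ :=
    hG.of_comap_le Subtype.val_injective (by simp) le_rfl
  obtain ⟨s, -, hs⟩ := exists_minimal_le_of_wellFoundedLT
    (fun s => ArrowsTo (G.induce s) K₄) Set.univ arrowsTo_univ
  refine ⟨s, hs.prop, fun v hv => hs.not_prop_of_lt (y := s \ {v.1}) (by simp) ?_⟩
  refine hv.of_comap_le (Set.inclusion_injective Set.sdiff_subset) (fun x hx => ?_)
    (fun _ _ h => deleteIncidenceSet_le (G.induce s) v h)
  obtain ⟨-, hxv⟩ := support_deleteIncidenceSet_subset _ v hx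
  simpa [Set.range_inclusion, Subtype.ext_iff] using hxv

theorem ncard_edgeSet_induce_le [Finite V] (s : Set V) :
    (G.induce s).edgeSet.ncard ≤ G.edgeSet.ncard :=
  Nat.card_le_card_of_injective _ (Embedding.induce s).mapEdgeSet.injective

end Critical

namespace IsCritical

variable {V : Type*} {G : SimpleGraph V} {v : V}

theorem seven_le_natCard [Finite V] (hG : IsCritical G) : 7 ≤ Nat.card V := by
  by_contra! hV
  exact not_arrowsTo_of_natCard_le_six (by lia) hG.arrowsTo

theorem exists_isNClique_three [Countable V] (hG : IsCritical G) (v : V) :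
    ∃ s : Finset V, G.IsNClique 3 s ∧ ∀ x ∈ s, G.Adj v x := by
  obtain ⟨c, hc⟩ := exists_isRainbowK4Free_of_not_arrowsTo (hG.not_arrowsTo_deleteIncidenceSet v)
  by_contra! hv
  exact hc.not_arrowsTo_of_forall_not_isNClique (by simpa using hv) hG.arrowsTo

theorem three_le_degree [Countable V] (hG : IsCritical G) (v : V) [Fintype (G.neighborSet v)] :
    3 ≤ G.degree v := by
  obtain ⟨s, hs, hvs⟩ := hG.exists_isNClique_three v
  rw [← hs.card_eq, ← card_neighborFinset_eq_degree]
  exact Finset.card_le_card fun x hx => (G.mem_neighborFinset v x).2 (hvs x hx)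

theorem isNClique_neighborFinset [Countable V] (hG : IsCritical G) [Fintype (G.neighborSet v)]
    (hv : G.degree v = 3) : G.IsNClique 3 (G.neighborFinset v) := by
  obtain ⟨s, hs, hvs⟩ := hG.exists_isNClique_three v
  have hsv : s ⊆ G.neighborFinset v := fun x hx => (G.mem_neighborFinset v x).2 (hvs x hx)
  rwa [← Finset.eq_of_subset_of_card_le hsv (by simp [hv, hs.card_eq])]

theorem exists_neighborFinset_eq [Countable V] [DecidableEq V] (hG : IsCritical G)
    [Fintype (G.neighborSet v)] (hv : G.degree v = 3) {a : V} (ha : G.Adj v a) :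
    ∃ b d, G.neighborFinset v = {a, b, d} ∧ G.Adj a b ∧ G.Adj a d ∧ G.Adj b d := by
  have hN := hG.isNClique_neighborFinset hv
  have haN : a ∈ G.neighborFinset v := (G.mem_neighborFinset v a).2 ha
  obtain ⟨b, d, -, hbd⟩ := Finset.card_eq_two.1
    (show ((G.neighborFinset v).erase a).card = 2 by simp [Finset.card_erase_of_mem haN, hv])
  have hNeq : G.neighborFinset v = {a, b, d} := by rw [← hbd, Finset.insert_erase haN]
  exact ⟨b, d, hNeq, is3Clique_triple_iff.1 (hNeq ▸ hN)⟩

theorem exists_adj_color_eq [Countable V] {α : Type*} [Countable α] {c : Sym2 V → α}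
    (hG : IsCritical G) (hc : IsRainbowK4Free (G.deleteIncidenceSet v) c) {a b d : V}
    (hab : a ≠ b) (had : a ≠ d) (hv : ∀ ⦃x⦄, G.Adj v x → x = a ∨ x = b ∨ x = d) :
    ∃ y, (G.deleteIncidenceSet v).Adj a y ∧ c s(a, y) = c s(b, d) := by
  by_contra! ha
  exact hc.not_arrowsTo_of_forall_ne hab had hv ha hG.arrowsTo

theorem degree_ne_three_of_adj [Countable V] (hG : IsCritical G) {a : V}
    [Fintype (G.neighborSet v)] [Fintype (G.neighborSet a)]
    (hv : G.degree v = 3) (hva : G.Adj v a) : G.degree a ≠ 3 := by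
  classical
  intro ha
  obtain ⟨b, d, hN, hab, had, hbd⟩ := hG.exists_neighborFinset_eq hv hva
  have adj_iff (x) : G.Adj v x ↔ x = a ∨ x = b ∨ x = d := by simp [← mem_neighborFinset, hN]
  obtain ⟨c, hc⟩ := exists_isRainbowK4Free_of_not_arrowsTo (hG.not_arrowsTo_deleteIncidenceSet v)
  obtain ⟨y, hay, hcy⟩ := hG.exists_adj_color_eq hc hab.ne had.ne fun x => (adj_iff x).1
  obtain ⟨hay', -, hyv⟩ := deleteIncidenceSet_adj.1 hay
  have hvy : G.Adj v y := (hG.isNClique_neighborFinset ha).isClique (by simpa using hva.symm)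
    (by simpa using hay') hyv.symm
  have hbd' : (G.deleteIncidenceSet v).Adj b d := deleteIncidenceSet_adj.2
    ⟨hbd, ((adj_iff b).2 (by simp)).ne', ((adj_iff d).2 (by simp)).ne'⟩
  rcases (adj_iff y).1 hvy with rfl | rfl | rfl
  · exact hay'.ne rfl
  · exact hc.isProper hay.symm hbd' had.ne (Sym2.eq_swap ▸ hcy)
  · exact hc.isProper hay.symm hbd'.symm hab.ne (by rwa [Sym2.eq_swap, @Sym2.eq_swap _ y])

theorem isUniversal_of_natCard_eq_seven (hG : IsCritical G) (hV : Nat.card V = 7)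
    [Fintype (G.neighborSet v)] (hv : G.degree v = 3) {a : V} (hva : G.Adj v a) :
    G.IsUniversal a := by
  classical
  intro x hax
  have : Finite V := Nat.finite_of_card_ne_zero (by simp [hV])
  by_contra hnot
  obtain ⟨b, d, hN, hab, had, hbd⟩ := hG.exists_neighborFinset_eq hv hva
  have adj_iff (x) : G.Adj v x ↔ x = a ∨ x = b ∨ x = d := by simp [← mem_neighborFinset, hN]
  have hvb := (adj_iff b).2 (by simp)
  have hvd := (adj_iff d).2 (by simp)
  have hvx : v ≠ x := by rintro rfl; exact hnot hva.symm
  have hxb : x ≠ b := by rintro rfl; exact hnot hab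
  have hxd : x ≠ d := by rintro rfl; exact hnot had
  have hle : G.deleteIncidenceSet v ≤ (⊤ : SimpleGraph V).deleteIncidenceSet v := fun _ _ h =>
    deleteIncidenceSet_adj.2 ((deleteIncidenceSet_adj.1 h).imp_left Adj.ne)
  obtain ⟨c, hc, hceq⟩ := exists_isRainbowK4Free_deleteIncidenceSet_top_eq hV
    (v := v) (a := a) (x := x) (b := b) (d := d)
    (by simp [hva.ne, hvx, hvb.ne, hvd.ne, hax, hab.ne, had.ne, hxb, hxd, hbd.ne])
  obtain ⟨y, hay, hcy⟩ := hG.exists_adj_color_eq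
    (hc.mono hle) hab.ne had.ne fun x => (adj_iff x).1
  obtain ⟨hay, -, hyv⟩ := deleteIncidenceSet_adj.1 hay
  have hyx : y ≠ x := by rintro rfl; exact hnot hay
  exact hc.isProper (deleteIncidenceSet_adj.2 ⟨hay.ne, hva.ne', hyv⟩)
    (deleteIncidenceSet_adj.2 ⟨hax, hva.ne', hvx.symm⟩) hyx (hcy.trans hceq.symm)

end IsCritical

section Counting

open Finset

variable {V : Type*} {A B : Finset V}

theorem card_filter_mem_edge_add_le [DecidableEq V] (hAB : Disjoint A B) (e : Sym2 V) :
    #{x ∈ B | x ∈ e} + (if e ∈ A.sym2 then 1 else 0) ≤ 1 + if e ∈ B.sym2 then 1 else 0 := by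
  induction e with | _ x y
  have hx : x ∈ A → x ∉ B := fun h => Finset.disjoint_left.1 hAB h
  have hy : y ∈ A → y ∉ B := fun h => Finset.disjoint_left.1 hAB h
  have heq : {z ∈ B | z ∈ s(x, y)} = {x, y} ∩ B := by ext; simp [and_comm]
  rw [heq]
  by_cases hxB : x ∈ B <;> by_cases hyB : y ∈ B
  · simpa [hxB, hyB, hx.mt (not_not.2 hxB)] using card_le_two
  all_goals grind [mk_mem_sym2_iff]

variable [Fintype V] {G : SimpleGraph V} [DecidableRel G.Adj]

theorem choose_two_le_card_edges_of_isClique [DecidableEq V] (hA : G.IsClique A) :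
    (#A).choose 2 ≤ #{e ∈ G.edgeFinset | e ∈ A.sym2} := by
  rw [← Sym2.card_image_offDiag]
  refine card_le_card fun e he => ?_
  obtain ⟨⟨x, y⟩, hxy, rfl⟩ := mem_image.1 he
  obtain ⟨hx, hy, hne⟩ := mem_offDiag.1 hxy
  simpa [hx, hy] using hA hx hy hne

theorem card_edges_le_choose_two [DecidableEq V] (B : Finset V) :
    #{e ∈ G.edgeFinset | e ∈ B.sym2} ≤ (#B).choose 2 := by
  rw [← Sym2.card_image_offDiag]
  refine card_le_card fun e he => ?_
  induction e with | _ x y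
  obtain ⟨hxy, hx, hy⟩ : G.Adj x y ∧ x ∈ B ∧ y ∈ B := by simpa using he
  exact mem_image.2 ⟨(x, y), mem_offDiag.2 ⟨hx, hy, hxy.ne⟩, rfl⟩

theorem sum_degree_add_choose_two_le [DecidableEq V] (hA : G.IsClique A) (hAB : Disjoint A B) :
    ∑ x ∈ B, G.degree x + (#A).choose 2 ≤
      #G.edgeFinset + #{e ∈ G.edgeFinset | e ∈ B.sym2} := by
  have double_count : ∑ x ∈ B, G.degree x = ∑ e ∈ G.edgeFinset, #{x ∈ B | x ∈ e} := by
    simp only [← card_incidenceFinset_eq_degree, incidenceFinset_eq_filter]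
    exact sum_card_bipartiteAbove_eq_sum_card_bipartiteBelow (· ∈ ·)
  calc ∑ x ∈ B, G.degree x + (#A).choose 2
    _ ≤ ∑ x ∈ B, G.degree x + #{e ∈ G.edgeFinset | e ∈ A.sym2} := by
      gcongr; exact choose_two_le_card_edges_of_isClique hA
    _ = ∑ e ∈ G.edgeFinset, (#{x ∈ B | x ∈ e} + if e ∈ A.sym2 then 1 else 0) := by
      rw [double_count, sum_add_distrib, card_filter]
    _ ≤ ∑ e ∈ G.edgeFinset, (1 + if e ∈ B.sym2 then 1 else 0) :=
      sum_le_sum fun e _ => card_filter_mem_edge_add_le hAB e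
    _ = #G.edgeFinset + #{e ∈ G.edgeFinset | e ∈ B.sym2} := by
      rw [sum_add_distrib, card_filter, card_eq_sum_ones]

theorem sum_degree_add_choose_two_le_card_edgeFinset (hA : G.IsClique A) (hAB : Disjoint A B)
    (hB : G.IsIndepSet B) : ∑ x ∈ B, G.degree x + (#A).choose 2 ≤ #G.edgeFinset := by
  classical
  have no_edges : #{e ∈ G.edgeFinset | e ∈ B.sym2} = 0 := by
    refine card_eq_zero.2 (filter_eq_empty_iff.2 fun e he => ?_)
    induction e with | _ x y
    have hxy : G.Adj x y := by simpa using he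
    rw [mk_mem_sym2_iff]
    exact fun h => hB h.1 h.2 hxy.ne hxy
  simpa only [no_edges, add_zero] using sum_degree_add_choose_two_le hA hAB

end Counting

namespace IsCritical

open Finset

variable {V : Type*} [Fintype V] {G : SimpleGraph V} [DecidableRel G.Adj] {v : V}

theorem isIndepSet_degree_eq_three (hG : IsCritical G) : G.IsIndepSet {x | G.degree x = 3} :=
  fun _ hx _ hy _ hxy => hG.degree_ne_three_of_adj hx hxy hy

theorem three_mul_card_add_three_le (hG : IsCritical G) (hv : G.degree v = 3) :
    3 * #{x | G.degree x = 3} + 3 ≤ #G.edgeFinset := by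
  have hN := hG.isNClique_neighborFinset hv
  have hdisj : Disjoint (G.neighborFinset v) ({x | G.degree x = 3} : Finset V) :=
    Finset.disjoint_left.2 fun x hx => by
      simpa using hG.degree_ne_three_of_adj hv ((G.mem_neighborFinset v x).1 hx)
  have hcount := sum_degree_add_choose_two_le_card_edgeFinset hN.isClique hdisj
    (by simpa using hG.isIndepSet_degree_eq_three)
  have hsum : ∑ x with G.degree x = 3, G.degree x = #{x | G.degree x = 3} * 3 :=
    sum_const_nat fun x hx => (mem_filter.1 hx).2
  rw [hsum, hN.card_eq] at hcount
  simpa [mul_comm] using hcount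

theorem four_mul_card_le (hG : IsCritical G) :
    4 * Fintype.card V ≤ 2 * #G.edgeFinset + #{x | G.degree x = 3} := by
  rw [← sum_degrees_eq_twice_card_edges, card_filter, ← sum_add_distrib, mul_comm,
    ← smul_eq_mul, ← card_univ]
  refine card_nsmul_le_sum _ _ _ fun x _ => ?_
  have := hG.three_le_degree x
  split_ifs <;> lia

theorem thirty_le_sum_degrees (hG : IsCritical G) (hV : Fintype.card V = 7)
    (hv : G.degree v = 3) : 30 ≤ ∑ x, G.degree x := by
  classical
  have hN : ∑ x ∈ G.neighborFinset v, G.degree x = 3 * 6 := by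
    have degree_eq (x) (hx : x ∈ G.neighborFinset v) : G.degree x = 6 := by
      rw [(G.degree_eq_card_sub_one x).2 (hG.isUniversal_of_natCard_eq_seven
        (by rw [Nat.card_eq_fintype_card, hV]) hv ((G.mem_neighborFinset v x).1 hx)), hV]
    rw [sum_const_nat degree_eq, card_neighborFinset_eq_degree, hv]
  have hNc : 4 * 3 ≤ ∑ x ∈ (G.neighborFinset v)ᶜ, G.degree x := by
    have hcard : #(G.neighborFinset v)ᶜ = 4 := by
      rw [card_compl, card_neighborFinset_eq_degree, hv, hV]
    rw [← hcard]
    exact card_nsmul_le_sum _ _ _ fun x _ => hG.three_le_degree x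
  rw [← sum_add_sum_compl (G.neighborFinset v)]
  lia

theorem fifteen_le_of_forall_degree_ne_three (hG : IsCritical G) (h : ∀ v, G.degree v ≠ 3) :
    15 ≤ #G.edgeFinset := by
  classical
  have hV : 7 ≤ Fintype.card V := Nat.card_eq_fintype_card (α := V) ▸ hG.seven_le_natCard
  obtain ⟨v⟩ : Nonempty V := Fintype.card_pos_iff.1 (by lia)
  obtain ⟨s, hs, hvs⟩ := hG.exists_isNClique_three v
  have hA : G.IsNClique 4 (insert v s) := hs.insert hvs
  obtain ⟨B, hBA, hB⟩ := exists_subset_card_eq (s := (insert v s)ᶜ) (n := 3)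
    (by rw [card_compl, hA.card_eq]; lia)
  have degrees_le : #B * 4 ≤ ∑ x ∈ B, G.degree x :=
    B.card_nsmul_le_sum (fun x => G.degree x) 4 fun x _ => (hG.three_le_degree x).lt_of_ne' (h x)
  have edges_le := card_edges_le_choose_two (G := G) B
  have count := sum_degree_add_choose_two_le hA.isClique (disjoint_compl_right.mono_right hBA)
  rw [hB] at degrees_le edges_le
  rw [hA.card_eq] at count
  norm_num [Nat.choose] at edges_le count
  lia

theorem fifteen_le_card_edgeFinset (hG : IsCritical G) : 15 ≤ #G.edgeFinset := by
  by_cases! h : ∀ v, G.degree v ≠ 3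
  · exact hG.fifteen_le_of_forall_degree_ne_three h
  obtain ⟨v, hv⟩ := h
  have hV : 7 ≤ Fintype.card V := Nat.card_eq_fintype_card (α := V) ▸ hG.seven_le_natCard
  by_contra! hE
  have hdeg := hG.four_mul_card_le
  have ht := hG.three_mul_card_add_three_le hv
  have hsum := hG.thirty_le_sum_degrees (by lia) hv
  rw [sum_degrees_eq_twice_card_edges] at hsum
  lia

end IsCritical

theorem ArrowsTo.fifteen_le_ncard_edgeSet {V : Type*} [Finite V] {G : SimpleGraph V}
    (hG : ArrowsTo G K₄) : 15 ≤ G.edgeSet.ncard := by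
  classical
  have : Fintype V := .ofFinite V
  obtain ⟨s, hs⟩ := hG.exists_isCritical_induce
  refine le_trans ?_ (ncard_edgeSet_induce_le s)
  rw [← coe_edgeFinset, Set.ncard_coe_finset]
  exact hs.fifteen_le_card_edgeFinset

section CompleteSplit

variable {V : Type*} {G : SimpleGraph V}

theorem arrowsTo_of_three_lt_card_common_neighbors {a b d : V} {Y : Finset V}
    (hab : G.Adj a b) (had : G.Adj a d) (hbd : G.Adj b d)
    (hY : ∀ y ∈ Y, G.Adj a y ∧ G.Adj b y ∧ G.Adj d y) (hcard : 3 < Y.card) :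
    ArrowsTo G K₄ := by
  by_contra h
  obtain ⟨c, hc⟩ := exists_isRainbowK4Free_of_not_arrowsTo h
  let u : Fin 3 → V := ![a, b, d]
  let opposite : Fin 3 → ℕ := ![c s(b, d), c s(a, d), c s(a, b)]
  have color_eq (y) (hy : y ∈ Y) : ∃ i, c s(u i, y) = opposite i := by
    obtain ⟨hay, hby, hdy⟩ := hY y hy
    rcases hc.opposite_eq hab had hay hbd hby hdy with h | h | h
    · exact ⟨2, h.symm⟩
    · exact ⟨1, h.symm⟩
    · exact ⟨0, h⟩
  choose! i hi using color_eq
  obtain ⟨y, hy, z, hz, hyz, hiyz⟩ := Finset.exists_ne_map_eq_of_card_lt_of_maps_to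
    (t := Finset.univ) (f := i) (by simpa using hcard) (by simp)
  have adj (j : Fin 3) {y : V} (hy : y ∈ Y) : G.Adj (u j) y := by
    have := hY y hy
    fin_cases j <;> simp_all [u]
  exact hc.isProper (adj (i y) hy) (adj (i y) hz) hyz
    ((hi y hy).trans (hiyz ▸ (hi z hz).symm))

end CompleteSplit

theorem stmt_3 :
    ARs (⊤ : SimpleGraph (Fin 4)) = 15 ∧
    (SimpleGraph.fromRel (fun v w : Fin 7 => v.val < 3 ∨ w.val < 3)).edgeSet.ncard = 15 ∧
    ArrowsTo (SimpleGraph.fromRel (fun v w : Fin 7 => v.val < 3 ∨ w.val < 3))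
      (⊤ : SimpleGraph (Fin 4)) ∧
    (∀ (V : Type) [Fintype V] (G : SimpleGraph V), G.edgeSet.ncard ≤ 14 →
      ¬ ArrowsTo G (⊤ : SimpleGraph (Fin 4))) := by
  have ncard_eq : (fromRel fun v w : Fin 7 => v.val < 3 ∨ w.val < 3).edgeSet.ncard = 15 := by
    rw [← coe_edgeFinset, Set.ncard_coe_finset]
    decide
  have arrowsTo : ArrowsTo (fromRel fun v w : Fin 7 => v.val < 3 ∨ w.val < 3) K₄ :=
    arrowsTo_of_three_lt_card_common_neighbors (a := 0) (b := 1) (d := 2) (Y := {3, 4, 5, 6})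
      (by decide) (by decide) (by decide) (by decide) (by decide)
  have isLeast : IsLeast {m | ∃ (n : ℕ) (G : SimpleGraph (Fin n)),
      ArrowsTo G K₄ ∧ G.edgeSet.ncard = m} 15 :=
    ⟨⟨7, _, arrowsTo, ncard_eq⟩, by rintro _ ⟨n, G, hG, rfl⟩; exact hG.fifteen_le_ncard_edgeSet⟩
  exact ⟨isLeast.csInf_eq, ncard_eq, arrowsTo,
    fun V _ G hG h => absurd h.fifteen_le_ncard_edgeSet (by lia)⟩
end
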